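/- arXiv:1909.02893 — 2 statements merged into one kernel-verified Lean document; each statement's English description precedes it below -/
import Mathlib

section
/- Let V and E be finite types, s, t : E → V, let N, M be natural numbers with 0 < N, let cV : V → Fin N be injective with cV v ≠ 0 for all v, let cE : E → Fin M, and let S, T : Fin M → Fin N satisfy S (cE e) = cV (s e) and T (cE e) = cV (t e) for every edge e. Define step : (Bool × Fin N) → Fin M → (Bool × Fin N) by step (b, x) y = (b && decide (x = S y ∧ x ≠ 0), T y). Then for all vertices v, v' : V and every list of edges l : List E: List.foldl step (true, cV v) (l.map cE) = (true, cV v') if and only if v :: l.map t = l.map s ++ [v'] (i.e., l is a valid path in the graph from v to v': the source of the first edge is v, the target of each edge equals the source of the next, and the target of the last edge is v'; for l = [] the condition reads v = v'). -/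
/-!
Induction on the list of edges, with the incoming check bit `b` left arbitrary: folding from
`(b, cV v)` gives `(true, cV v')` iff `b` is true and the edges form a path from `v` to `v'`.
In the induction step the state after an edge `e` is again of the form `(b', cV (t e))`, and
since `cV` is injective and avoids `0`, the bit `b'` is true iff `b` is true and `v = s e`.
-/

/-- Folding the edge-evaluator step function over a list of edge codes,
starting from the code of `v` with check bit `true`, yields `(true, cV v')`
exactly when the list of edges is a valid path from `v` to `v'` in the graph. -/
theorem foldl_step_eq_iff_valid_path (V E : Type*) [Fintype V] [Fintype E]
    (s t : E → V) (N M : ℕ) (hN : 0 < N)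
    (cV : V → Fin N) (hcV : Function.Injective cV)
    (hcV0 : ∀ v : V, cV v ≠ ⟨0, hN⟩)
    (cE : E → Fin M) (S T : Fin M → Fin N)
    (hS : ∀ e : E, S (cE e) = cV (s e))
    (hT : ∀ e : E, T (cE e) = cV (t e)) :
    ∀ (v v' : V) (l : List E),
      List.foldl
        (fun (p : Bool × Fin N) (y : Fin M) =>
          (p.1 && decide (p.2 = S y ∧ p.2 ≠ ⟨0, hN⟩), T y))
        (true, cV v) (l.map cE) = (true, cV v')
      ↔ v :: l.map t = l.map s ++ [v'] := by
  intro v v' l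
  suffices H : ∀ (b : Bool) (v : V),
      List.foldl
        (fun (p : Bool × Fin N) (y : Fin M) =>
          (p.1 && decide (p.2 = S y ∧ p.2 ≠ ⟨0, hN⟩), T y))
        (b, cV v) (l.map cE) = (true, cV v')
      ↔ b = true ∧ v :: l.map t = l.map s ++ [v'] by
    simpa only [true_and] using H true v
  induction l with
  | nil => intro b v; simp [hcV.eq_iff]
  | cons e l ih =>
    intro b v
    rw [List.map_cons, List.foldl_cons, hS, hT, ih]
    simp [hcV.eq_iff, hcV0, and_assoc]
end

section
/- Let V and E be finite types, s, t : E → V, let N, M be natural numbers with 0 < N, let cV : V → Fin N be injective with cV v ≠ 0 for all v, let cE : E → Fin M, and let S, T : Fin M → Fin N satisfy S (cE e) = cV (s e) and T (cE e) = cV (t e) for every edge e. Define step : (Bool × Fin N) → Fin M → (Bool × Fin N) by step (b, x) y = (b && decide (x = S y ∧ x ≠ 0), T y). Then for all vertices v, v' : V and every list of edges l : List E, letting p := List.foldl step (true, cV v) (l.map cE), the single output bit p.1 && decide (p.2 = cV v' ∧ cV v' ≠ 0) equals true if and only if v :: l.map t = l.map s ++ [v'] (i.e., l is a valid path in the graph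 from v to v'). -/
/-- The snarkized verifying circuit: the single output bit obtained by folding
the edge-evaluator step over the edge codes and then matching the final vertex
code against the code of `v'` is `true` exactly when the list of edges is a
valid path from `v` to `v'` in the graph. -/
theorem snarkized_output_bit_iff_valid_path (V E : Type*) [Fintype V] [Fintype E]
    (s t : E → V) (N M : ℕ) (hN : 0 < N)
    (cV : V → Fin N) (hcV : Function.Injective cV)
    (hcV0 : ∀ v : V, cV v ≠ ⟨0, hN⟩)
    (cE : E → Fin M) (S T : Fin M → Fin N)
    (hS : ∀ e : E, S (cE e) = cV (s e))
    (hT : ∀ e : E, T (cE e) = cV (t e)) :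
    ∀ (v v' : V) (l : List E),
      ((let p :=
          List.foldl
            (fun (p : Bool × Fin N) (y : Fin M) =>
              (p.1 && decide (p.2 = S y ∧ p.2 ≠ ⟨0, hN⟩), T y))
            (true, cV v) (l.map cE)
        p.1 && decide (p.2 = cV v' ∧ cV v' ≠ ⟨0, hN⟩)) = true)
      ↔ v :: l.map t = l.map s ++ [v'] := by
  intro v w l
  -- The fold can only lower the check bit, so the induction runs over an arbitrary starting bit `b`;
  -- each edge then contributes the conjunct `v = s e`, by injectivity of `cV`.
  suffices h : ∀ (b : Bool) (v : V),
      ((let p :=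
          List.foldl
            (fun (p : Bool × Fin N) (y : Fin M) =>
              (p.1 && decide (p.2 = S y ∧ p.2 ≠ ⟨0, hN⟩), T y))
            (b, cV v) (l.map cE)
        p.1 && decide (p.2 = cV w ∧ cV w ≠ ⟨0, hN⟩)) = true)
      ↔ b = true ∧ v :: l.map t = l.map s ++ [w] by
    simpa using h true v
  induction l with
  | nil =>
    intro b v
    simp [hcV.eq_iff, hcV0]
  | cons e l ih =>
    intro b v
    simp only [List.map_cons, List.foldl_cons, hS, hT]
    rw [ih]
    simp [hcV.eq_iff, hcV0, and_assoc]
end
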